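/- Let U : ℂ \ {0} → ℝ and let ψ = (ψ₁, ψ₂) satisfy the Dirac equation 𝒟ψ = 0 on ℂ \ {0} with potential U. For u ∈ ℂ \ {0} put z = −1/u and define ψ̃₁(u) = z·ψ₁(z), ψ̃₂(u) = conj(z)·ψ₂(z), and Ũ(u) = |z|²·U(z). Then ψ̃ = (ψ̃₁, ψ̃₂) satisfies the Dirac equation in the variable u with potential Ũ: ∂_u ψ̃₂ + Ũ ψ̃₁ = 0 and ∂̄_u ψ̃₁ = Ũ ψ̃₂ on ℂ \ {0}. -/

import Mathlib

open Complex

/-- The Wirtinger derivative ∂f = (1/2)(∂f/∂x − i ∂f/∂y). -/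
noncomputable def wd (f : ℂ → ℂ) (z : ℂ) : ℂ :=
  (1 / 2) * (fderiv ℝ f z 1 - Complex.I * fderiv ℝ f z Complex.I)

/-- The Wirtinger derivative ∂̄f = (1/2)(∂f/∂x + i ∂f/∂y). -/
noncomputable def wdbar (f : ℂ → ℂ) (z : ℂ) : ℂ :=
  (1 / 2) * (fderiv ℝ f z 1 + Complex.I * fderiv ℝ f z Complex.I)

/-- ψ = (ψ₁, ψ₂) satisfies the Dirac equation 𝒟ψ = 0 with potential U on Ω. -/
def DiracEq (Ω : Set ℂ) (U : ℂ → ℝ) (ψ₁ ψ₂ : ℂ → ℂ) : Prop :=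
  ∀ z ∈ Ω, wd ψ₂ z + (U z : ℂ) * ψ₁ z = 0 ∧ wdbar ψ₁ z = (U z : ℂ) * ψ₂ z

/-!
A spinor behaves like a pair of half-order differentials `ψ₁ √dz`, `ψ₂ √dz̄`: for holomorphic `s`
and `φ` with `φ' = s ^ 2`, the chain rule multiplies `∂ψ₂` by `s ^ 2` and `∂̄ψ₁` by `conj s ^ 2`,
while the factors `conj s` and `s` in front are constants for `∂` and `∂̄` respectively. Inversion
is the case `φ u = s u = -1 / u`.
-/

open ComplexConjugate

section Wirtinger

variable {f g φ : ℂ → ℂ} {z φ' : ℂ}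

theorem fderiv_apply_eq_wd_add_wdbar (f : ℂ → ℂ) (z v : ℂ) :
    fderiv ℝ f z v = wd f z * v + wdbar f z * conj v := by
  have real_coords : fderiv ℝ f z v = v.re * fderiv ℝ f z 1 + v.im * fderiv ℝ f z I := by
    have basis_expansion : v = v.re • (1 : ℂ) + v.im • I := by simp
    conv_lhs => rw [basis_expansion, map_add, map_smul, map_smul, real_smul, real_smul]
  have conj_v_eq : conj v = v.re - v.im * I := by
    apply Complex.ext <;> simp
  rw [real_coords, conj_v_eq, wd, wdbar]
  linear_combination v.im * fderiv ℝ f z I * I_sq +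
    (1 / 2) * (fderiv ℝ f z 1 - I * fderiv ℝ f z I) * re_add_im v

theorem wd_mul (hf : DifferentiableAt ℝ f z) (hg : DifferentiableAt ℝ g z) :
    wd (fun w => f w * g w) z = f z * wd g z + wd f z * g z := by
  simp only [wd, fderiv_fun_mul hf hg, add_apply, smul_apply, smul_eq_mul]
  ring

theorem wdbar_mul (hf : DifferentiableAt ℝ f z) (hg : DifferentiableAt ℝ g z) :
    wdbar (fun w => f w * g w) z = f z * wdbar g z + wdbar f z * g z := by
  simp only [wdbar, fderiv_fun_mul hf hg, add_apply, smul_apply, smul_eq_mul]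
  ring

theorem wd_conj (f : ℂ → ℂ) (z : ℂ) : wd (fun w => conj (f w)) z = conj (wdbar f z) := by
  have fderiv_conj : fderiv ℝ (fun w => conj (f w)) z =
      (conjCLE : ℂ →L[ℝ] ℂ).comp (fderiv ℝ f z) := conjCLE.comp_fderiv
  simp only [wd, wdbar, fderiv_conj, ContinuousLinearMap.comp_apply, ContinuousLinearEquiv.coe_coe,
    conjCLE_apply, map_mul, map_add, map_div₀, map_one, map_ofNat, conj_I, neg_mul, sub_eq_add_neg]

theorem wdbar_eq_zero_of_differentiableAt (hf : DifferentiableAt ℂ f z) : wdbar f z = 0 := by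
  have fderiv_I : fderiv ℝ f z I = I * fderiv ℝ f z 1 := by
    simp [hf.fderiv_restrictScalars ℝ, mul_comm]
  rw [wdbar, fderiv_I]
  linear_combination (1 / 2) * fderiv ℝ f z 1 * I_sq

theorem fderiv_comp_apply_of_hasDerivAt (hf : DifferentiableAt ℝ f (φ z))
    (hφ : HasDerivAt φ φ' z) (v : ℂ) :
    fderiv ℝ (fun w => f (φ w)) z v =
      wd f (φ z) * (φ' * v) + wdbar f (φ z) * (conj φ' * conj v) := by
  have chain_rule := (hf.hasFDerivAt.comp z (hφ.hasFDerivAt.restrictScalars ℝ)).fderiv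
  calc
    fderiv ℝ (fun w => f (φ w)) z v = fderiv ℝ f (φ z) (φ' * v) := by
      simpa [Function.comp_def, mul_comm] using DFunLike.congr_fun chain_rule v
    _ = _ := by rw [fderiv_apply_eq_wd_add_wdbar, map_mul]

theorem wd_comp (hf : DifferentiableAt ℝ f (φ z)) (hφ : HasDerivAt φ φ' z) :
    wd (fun w => f (φ w)) z = φ' * wd f (φ z) := by
  rw [wd]
  simp only [fderiv_comp_apply_of_hasDerivAt hf hφ, map_one, conj_I]
  linear_combination (1 / 2) * (conj φ' * wdbar f (φ z) - φ' * wd f (φ z)) * I_sq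

theorem wdbar_comp (hf : DifferentiableAt ℝ f (φ z)) (hφ : HasDerivAt φ φ' z) :
    wdbar (fun w => f (φ w)) z = conj φ' * wdbar f (φ z) := by
  rw [wdbar]
  simp only [fderiv_comp_apply_of_hasDerivAt hf hφ, map_one, conj_I]
  linear_combination (1 / 2) * (φ' * wd f (φ z) - conj φ' * wdbar f (φ z)) * I_sq

theorem wdbar_mul_comp {s : ℂ → ℂ} (hs : DifferentiableAt ℂ s z)
    (hf : DifferentiableAt ℝ f (φ z)) (hφ : HasDerivAt φ φ' z) :
    wdbar (fun w => s w * f (φ w)) z = s z * (conj φ' * wdbar f (φ z)) := by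
  have hfφ : DifferentiableAt ℝ (fun w => f (φ w)) z :=
    hf.comp z hφ.differentiableAt.real_of_complex
  rw [wdbar_mul hs.real_of_complex hfφ, wdbar_comp hf hφ, wdbar_eq_zero_of_differentiableAt hs,
    zero_mul, add_zero]

theorem wd_conj_mul_comp {s : ℂ → ℂ} (hs : DifferentiableAt ℂ s z)
    (hf : DifferentiableAt ℝ f (φ z)) (hφ : HasDerivAt φ φ' z) :
    wd (fun w => conj (s w) * f (φ w)) z = conj (s z) * (φ' * wd f (φ z)) := by
  have hfφ : DifferentiableAt ℝ (fun w => f (φ w)) z :=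
    hf.comp z hφ.differentiableAt.real_of_complex
  have hconj : DifferentiableAt ℝ (fun w => conj (s w)) z :=
    conjCLE.differentiableAt.comp z hs.real_of_complex
  rw [wd_mul hconj hfφ, wd_comp hf hφ, wd_conj, wdbar_eq_zero_of_differentiableAt hs,
    map_zero, zero_mul, add_zero]

end Wirtinger

theorem hasDerivAt_neg_inv {𝕜 : Type*} [NontriviallyNormedField 𝕜] {u : 𝕜} (hu : u ≠ 0) :
    HasDerivAt (fun x : 𝕜 => -x⁻¹) ((-u⁻¹) ^ 2) u := by
  simpa using (hasDerivAt_inv hu).fun_neg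

theorem stmt_7_general {Ω Ω' : Set ℂ} {U : ℂ → ℝ} {ψ₁ ψ₂ φ s : ℂ → ℂ} (hΩ : IsOpen Ω)
    (h₁ : DifferentiableOn ℝ ψ₁ Ω) (h₂ : DifferentiableOn ℝ ψ₂ Ω) (hψ : DiracEq Ω U ψ₁ ψ₂)
    (hmaps : Set.MapsTo φ Ω' Ω) (hs : ∀ u ∈ Ω', DifferentiableAt ℂ s u)
    (hφ : ∀ u ∈ Ω', HasDerivAt φ (s u ^ 2) u) :
    DiracEq Ω' (fun u => normSq (s u) * U (φ u)) (fun u => s u * ψ₁ (φ u))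
      (fun u => conj (s u) * ψ₂ (φ u)) := by
  intro u hu
  have hΩu : Ω ∈ nhds (φ u) := hΩ.mem_nhds (hmaps hu)
  obtain ⟨dirac_wd, dirac_wdbar⟩ := hψ (φ u) (hmaps hu)
  constructor
  · rw [wd_conj_mul_comp (hs u hu) (h₂.differentiableAt hΩu) (hφ u hu), ofReal_mul,
      normSq_eq_conj_mul_self]
    linear_combination conj (s u) * s u ^ 2 * dirac_wd
  · rw [wdbar_mul_comp (hs u hu) (h₁.differentiableAt hΩu) (hφ u hu), ofReal_mul,
      normSq_eq_conj_mul_self, map_pow]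
    linear_combination s u * conj (s u) ^ 2 * dirac_wdbar

theorem stmt_7 (U : ℂ → ℝ) (ψ₁ ψ₂ : ℂ → ℂ)
    (h₁ : DifferentiableOn ℝ ψ₁ {z : ℂ | z ≠ 0})
    (h₂ : DifferentiableOn ℝ ψ₂ {z : ℂ | z ≠ 0})
    (hψ : DiracEq {z : ℂ | z ≠ 0} U ψ₁ ψ₂) :
    DiracEq {u : ℂ | u ≠ 0}
      (fun u => Complex.normSq (-u⁻¹) * U (-u⁻¹))
      (fun u => (-u⁻¹) * ψ₁ (-u⁻¹))
      (fun u => starRingEnd ℂ (-u⁻¹) * ψ₂ (-u⁻¹)) := by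
  exact stmt_7_general isOpen_ne h₁ h₂ hψ (fun _ hu => neg_ne_zero.2 (inv_ne_zero hu))
    (fun _ hu => (hasDerivAt_neg_inv hu).differentiableAt) fun _ hu => hasDerivAt_neg_inv hu
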